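/- Let x, y, z ∈ ℂ with xyz ≠ 0, xy ≠ z, and xy ≠ −z, and let f be the binary constraint (1, x, y, z). Define u = [1, −1/(xz)] and g(x_1,x_2) = Σ_{x_3 ∈ {0,1}} f(x_1,x_3)·f(x_3,x_2)·f(x_2,x_3)·u(x_3). Then g equals the binary constraint (1 − xy/z, xy − z, 0, (x²y² − z²)/x); in particular g(1,0) = 0 while g(0,0), g(0,1), and g(1,1) are all nonzero, and g is T-constructible from {f, u}. -/

import Mathlib

/-- A (complex-valued Boolean) constraint of arity `k`. -/
abbrev Constraint (k : ℕ) : Type := (Fin k → Bool) → ℂ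

/-- The binary equality constraint `EQ = [1,0,1]`, as a two-argument function. -/
def EQc : Bool → Bool → ℂ := fun a b => if a = b then 1 else 0

/-- The binary disequality constraint `XOR = [0,1,0]`, as a two-argument function. -/
def XORc : Bool → Bool → ℂ := fun a b => if a = b then 0 else 1

/-- The binary constraint `Implies = (1,1,0,1)`, as a two-argument function. -/
def IMPc : Bool → Bool → ℂ := fun a b => if a = true ∧ b = false then 0 else 1

/-- The unary constraint `[a, b]` (value `a` on input `0`, value `b` on input `1`). -/
def unC (a b : ℂ) : Constraint 1 := fun x => if x 0 then b else a

/-- The binary constraint `(a,b,c,d) = (f(0,0), f(0,1), f(1,0), f(1,1))`. -/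
def binC (a b c d : ℂ) : Constraint 2 := fun x =>
  if x 0 then (if x 1 then d else c) else (if x 1 then b else a)

/-- `OR = [0,1,1]`. -/
def ORc : Constraint 2 := binC 0 1 1 1

/-- `Implies = (1,1,0,1)` as a binary constraint. -/
def Impliesc : Constraint 2 := binC 1 1 0 1

/-- Membership in `NZ`: the constraint is everywhere nonzero. -/
def inNZ {k : ℕ} (f : Constraint k) : Prop := ∀ x, f x ≠ 0

/-- Membership in `DG`: the constraint is a product of unary constraints, one per variable. -/
def inDG {k : ℕ} (f : Constraint k) : Prop :=
  ∃ g : Fin k → Bool → ℂ, ∀ x, f x = ∏ i, g i (x i)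

/-- Membership in `ED`: the constraint is a product of at least one factor, each factor
being a unary constraint applied to some variable, or `EQ`/`XOR` applied to two variables. -/
def inED {k : ℕ} (f : Constraint k) : Prop :=
  ∃ (l1 l2 : ℕ) (h : Fin l1 → Bool → ℂ) (j : Fin l1 → Fin k)
    (g : Fin l2 → Bool → Bool → ℂ) (m n : Fin l2 → Fin k),
    1 ≤ l1 + l2 ∧ (∀ i, g i = EQc ∨ g i = XORc) ∧
    ∀ x, f x = (∏ i, h i (x (j i))) * ∏ i, g i (x (m i)) (x (n i))

/-- Membership in `IM`: `f ∉ NZ` and `f` is a product of at least one factor, each factor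
being a unary constraint applied to some variable, or `Implies` applied to two variables. -/
def inIM {k : ℕ} (f : Constraint k) : Prop :=
  ¬ inNZ f ∧
  ∃ (l1 l2 : ℕ) (h : Fin l1 → Bool → ℂ) (j : Fin l1 → Fin k)
    (m n : Fin l2 → Fin k),
    1 ≤ l1 + l2 ∧
    ∀ x, f x = (∏ i, h i (x (j i))) * ∏ i, IMPc (x (m i)) (x (n i))

/-- The underlying relation `R_f = {x : f x ≠ 0}` of a constraint `f`. -/
def relOf {k : ℕ} (f : Constraint k) : Set (Fin k → Bool) := {x | f x ≠ 0}

/-- Factors allowed in an IMP-style factorization of a relation: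
`Δ_c(x_i)` or `Implies(x_i, x_j)`. -/
inductive ImpFactor (k : ℕ) where
  | delta (c : Bool) (i : Fin k)
  | imp (i j : Fin k)
deriving DecidableEq

/-- Evaluation of an IMP-factor at an assignment. -/
def ImpFactor.eval {k : ℕ} : ImpFactor k → (Fin k → Bool) → Bool
  | .delta c i, x => x i == c
  | .imp i j, x => !(x i) || x j

/-- `L` is a factor list for the relation `R`: the conjunction of the factors in `L` equals `R`. -/
def isFactorListFor {k : ℕ} (L : List (ImpFactor k)) (R : Set (Fin k → Bool)) : Prop :=
  ∀ x, x ∈ R ↔ ∀ fac ∈ L, fac.eval x = true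

/-- Membership in `IMP`: the relation is the conjunction of a positive number of factors of the
forms `Δ_0(x)`, `Δ_1(x)`, `Implies(x,y)`. -/
def inIMP {k : ℕ} (R : Set (Fin k → Bool)) : Prop :=
  ∃ L : List (ImpFactor k), L ≠ [] ∧ isFactorListFor L R

/-- `f` has imp support when `R_f ∈ IMP`. -/
def hasImpSupport {k : ℕ} (f : Constraint k) : Prop := inIMP (relOf f)

/-- A factor list is imp-distinctive if no variable occurs both in a `Δ_c` factor and in an
`Implies` factor, and no factor `Implies(x,x)` occurs. -/
def impDistinctive {k : ℕ} (L : List (ImpFactor k)) : Prop :=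
  (∀ i : Fin k, ¬ ((∃ c, ImpFactor.delta c i ∈ L) ∧
      (∃ j, ImpFactor.imp i j ∈ L ∨ ImpFactor.imp j i ∈ L))) ∧
  (∀ i : Fin k, ImpFactor.imp i i ∉ L)

/-- Factors of the forms `Δ_c(x_i)` or `EQ(x_i,x_j)`. -/
inductive EqFactor (k : ℕ) where
  | delta (c : Bool) (i : Fin k)
  | eq (i j : Fin k)
deriving DecidableEq

/-- Evaluation of such a factor at an assignment. -/
def EqFactor.eval {k : ℕ} : EqFactor k → (Fin k → Bool) → Bool
  | .delta c i, x => x i == c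
  | .eq i j, x => x i == x j

/-- `f` is in simple form: its representing Boolean matrix (rows indexed by `R_f`) has
no all-`0` column, no all-`1` column, and no two identical columns. -/
def simpleForm {k : ℕ} (f : Constraint k) : Prop :=
  (∀ i : Fin k, ∃ a, f a ≠ 0 ∧ a i = true) ∧
  (∀ i : Fin k, ∃ a, f a ≠ 0 ∧ a i = false) ∧
  (∀ i j : Fin k, i ≠ j → ∃ a, f a ≠ 0 ∧ a i ≠ a j)

/-- A constraint of unspecified arity. -/
abbrev Ctr : Type := Σ k : ℕ, Constraint k

/-- T-constructibility of a constraint from a set `G` of constraints, by finitely many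
applications of permutation, pinning, projection, linking, expansion, multiplication,
and normalization. -/
inductive TCon (G : Set Ctr) : Ctr → Prop where
  | base {c : Ctr} : c ∈ G → TCon G c
  | perm {k : ℕ} {g : Constraint k} (σ : Equiv.Perm (Fin k)) :
      TCon G ⟨k, g⟩ → TCon G ⟨k, fun x => g (fun i => x (σ i))⟩
  | pinning {k : ℕ} {g : Constraint (k+1)} (i : Fin (k+1)) (c : Bool) :
      TCon G ⟨k+1, g⟩ → TCon G ⟨k, fun x => g (i.insertNth c x)⟩
  | proj {k : ℕ} {g : Constraint (k+1)} (i : Fin (k+1)) :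
      TCon G ⟨k+1, g⟩ →
      TCon G ⟨k, fun x => g (i.insertNth false x) + g (i.insertNth true x)⟩
  | link {k : ℕ} {g : Constraint (k+1)} (i : Fin (k+1)) (j : Fin k) :
      TCon G ⟨k+1, g⟩ → TCon G ⟨k, fun x => g (i.insertNth (x j) x)⟩
  | expand {k : ℕ} {g : Constraint k} (i : Fin (k+1)) :
      TCon G ⟨k, g⟩ → TCon G ⟨k+1, fun x => g (fun j => x (i.succAbove j))⟩
  | mul {k : ℕ} {g₁ g₂ : Constraint k} :
      TCon G ⟨k, g₁⟩ → TCon G ⟨k, g₂⟩ → TCon G ⟨k, fun x => g₁ x * g₂ x⟩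
  | norm {k : ℕ} {g : Constraint k} (lam : ℂ) (hlam : lam ≠ 0) :
      TCon G ⟨k, g⟩ → TCon G ⟨k, fun x => lam * g x⟩

/-- T-constructibility using no projection operation. -/
inductive TConNoProj (G : Set Ctr) : Ctr → Prop where
  | base {c : Ctr} : c ∈ G → TConNoProj G c
  | perm {k : ℕ} {g : Constraint k} (σ : Equiv.Perm (Fin k)) :
      TConNoProj G ⟨k, g⟩ → TConNoProj G ⟨k, fun x => g (fun i => x (σ i))⟩
  | pinning {k : ℕ} {g : Constraint (k+1)} (i : Fin (k+1)) (c : Bool) :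
      TConNoProj G ⟨k+1, g⟩ → TConNoProj G ⟨k, fun x => g (i.insertNth c x)⟩
  | link {k : ℕ} {g : Constraint (k+1)} (i : Fin (k+1)) (j : Fin k) :
      TConNoProj G ⟨k+1, g⟩ → TConNoProj G ⟨k, fun x => g (i.insertNth (x j) x)⟩
  | expand {k : ℕ} {g : Constraint k} (i : Fin (k+1)) :
      TConNoProj G ⟨k, g⟩ → TConNoProj G ⟨k+1, fun x => g (fun j => x (i.succAbove j))⟩
  | mul {k : ℕ} {g₁ g₂ : Constraint k} :
      TConNoProj G ⟨k, g₁⟩ → TConNoProj G ⟨k, g₂⟩ →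
      TConNoProj G ⟨k, fun x => g₁ x * g₂ x⟩
  | norm {k : ℕ} {g : Constraint k} (lam : ℂ) (hlam : lam ≠ 0) :
      TConNoProj G ⟨k, g⟩ → TConNoProj G ⟨k, fun x => lam * g x⟩

/-- Pinning the `i`-th variable of `f` to the bit `c`. -/
def pinC {k : ℕ} (f : Constraint (k+1)) (i : Fin (k+1)) (c : Bool) : Constraint k :=
  fun x => f (i.insertNth c x)

/-- `R_f` admits a good factor list: a factor list consisting only of `Implies` factors,
in which every variable is incident to at least one edge of the induced imp graph,
and whose imp graph has no (directed) cycle. -/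
def hasGoodFactorList {k : ℕ} (f : Constraint k) : Prop :=
  ∃ L : List (ImpFactor k),
    isFactorListFor L (relOf f) ∧
    (∀ fac ∈ L, ∃ i j, fac = ImpFactor.imp i j) ∧
    (∀ i : Fin k, ∃ j, ImpFactor.imp i j ∈ L ∨ ImpFactor.imp j i ∈ L) ∧
    ¬ ∃ i : Fin k, Relation.TransGen (fun a b => ImpFactor.imp a b ∈ L) i i

/-- For `x, y, z ∈ ℂ` with `xyz ≠ 0`, `xy ≠ z`, `xy ≠ -z`, `f = (1,x,y,z)`,
`u = [1, -1/(xz)]`, and `g(x₁,x₂) = Σ_{x₃∈{0,1}} f(x₁,x₃)·f(x₃,x₂)·f(x₂,x₃)·u(x₃)`: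
`g = (1 - xy/z, xy - z, 0, (x²y² - z²)/x)`; in particular `g(1,0) = 0` while `g(0,0)`,
`g(0,1)`, `g(1,1)` are all nonzero, and `g` is T-constructible from `{f, u}`. -/
theorem stmt9 (x y z : ℂ) (hnz : x * y * z ≠ 0) (h1 : x * y ≠ z) (h2 : x * y ≠ -z)
    (f : Constraint 2) (hf : f = binC 1 x y z)
    (u : Constraint 1) (hu : u = unC 1 (-(1 / (x * z))))
    (g : Constraint 2)
    (hg : ∀ v : Fin 2 → Bool,
      g v = f ![v 0, false] * f ![false, v 1] * f ![v 1, false] * u ![false]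
          + f ![v 0, true] * f ![true, v 1] * f ![v 1, true] * u ![true]) :
    (∀ v, g v = binC (1 - x * y / z) (x * y - z) 0 ((x ^ 2 * y ^ 2 - z ^ 2) / x) v) ∧
    g ![true, false] = 0 ∧
    g ![false, false] ≠ 0 ∧ g ![false, true] ≠ 0 ∧ g ![true, true] ≠ 0 ∧
    TCon ({⟨2, f⟩, ⟨1, u⟩} : Set Ctr) ⟨2, g⟩ := by
  have hxy : x ≠ 0 ∧ y ≠ 0 ∧ z ≠ 0 := by
    refine ⟨?_, ?_, ?_⟩ <;> rintro rfl <;> simp at hnz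
  obtain ⟨hx, hy, hz⟩ := hxy
  have hm : x * y - z ≠ 0 := sub_ne_zero.mpr h1
  have hp : x * y + z ≠ 0 := fun h => h2 (eq_neg_of_add_eq_zero_left h)
  have key : ∀ v, g v =
      binC (1 - x * y / z) (x * y - z) 0 ((x ^ 2 * y ^ 2 - z ^ 2) / x) v := by
    intro v
    rw [hg v, hf, hu]
    cases h0 : v 0 <;> cases h1' : v 1 <;> simp [binC, unC, h0, h1'] <;> field_simp <;> ring
  refine ⟨key, ?_, ?_, ?_, ?_, ?_⟩
  · rw [key]; simp [binC]
  · rw [key]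
    have : (1 - x * y / z) = -(x * y - z) / z := by field_simp; ring
    simp only [binC, this]
    simp [hz, sub_ne_zero, h1.symm]
  · rw [key]; simpa [binC] using hm
  · rw [key]
    have : (x ^ 2 * y ^ 2 - z ^ 2) / x = (x * y - z) * (x * y + z) / x := by ring
    simp only [binC, this]
    simp [hm, hp, hx]
  · have bf : TCon ({⟨2, f⟩, ⟨1, u⟩} : Set Ctr) ⟨2, f⟩ := TCon.base (by simp)
    have bu : TCon ({⟨2, f⟩, ⟨1, u⟩} : Set Ctr) ⟨1, u⟩ := TCon.base (by simp)
    have a1 := TCon.expand (1 : Fin 3) bf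
    have a2 := TCon.expand (0 : Fin 3) bf
    have a3 := TCon.expand (0 : Fin 3) (TCon.perm (Equiv.swap 0 1) bf)
    have a4 := TCon.expand (0 : Fin 3) (TCon.expand (0 : Fin 2) bu)
    have a5 := TCon.proj (2 : Fin 3) (TCon.mul (TCon.mul (TCon.mul a1 a3) a2) a4)
    convert a5 using 2
    funext v
    rw [hg v]
    refine congrArg₂ (· + ·) ?_ ?_ <;>
      refine congrArg₂ (· * ·) (congrArg₂ (· * ·) (congrArg₂ (· * ·) (congrArg f ?_)
        (congrArg f ?_)) (congrArg f ?_)) (congrArg u ?_) <;>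
      funext i <;> fin_cases i <;> rfl
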